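/- arXiv:1211.6261 — 3 statements merged into one kernel-verified Lean document; each statement's English description precedes it below -/
import Mathlib

section
/- Let n and d be positive integers and G a subgroup of S_n acting on ℕ^n on positions. With T(i) and C(i) the numbers of tested and canonical vectors of degree i respectively, the relative error of orderly generation up to degree d satisfies (Σ_{i=0}^{d} T(i) − Σ_{i=0}^{d} C(i)) / (Σ_{i=0}^{d} C(i)) ≤ min{ n(|G| − 1)/(n + d), n − 1 }. -/
variable {n : ℕ}

/-- Action of a permutation on integer vectors, on positions: `(σ·v)_i = v_{σ⁻¹(i)}`. -/
def act (σ : Equiv.Perm (Fin n)) (v : Fin n → ℕ) : Fin n → ℕ := fun i => v (σ⁻¹ i)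

/-- `v` is canonical under `G` if it is the lexicographically greatest element of its orbit. -/
def IsCanonical (G : Subgroup (Equiv.Perm (Fin n))) (v : Fin n → ℕ) : Prop :=
  ∀ σ ∈ G, toLex (act σ v) ≤ toLex v

/-- Position of the last nonzero entry of `v` (position `0` if `v = 0`). -/
def lastNZ [NeZero n] (v : Fin n → ℕ) : Fin n :=
  if h : v = 0 then 0
  else ((Finset.univ : Finset (Fin n)).filter fun i => v i ≠ 0).max'
    (by obtain ⟨i, hi⟩ := Function.ne_iff.mp h
        exact ⟨i, Finset.mem_filter.mpr ⟨Finset.mem_univ i, hi⟩⟩)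

/-- The father of a vector: decrement its last nonzero entry (fixes the zero vector). -/
def father [NeZero n] (v : Fin n → ℕ) : Fin n → ℕ :=
  Function.update v (lastNZ v) (v (lastNZ v) - 1)

/-- The children of a vector: increment the last nonzero entry, or set a later entry to 1. -/
def children [NeZero n] (v : Fin n → ℕ) : Set (Fin n → ℕ) :=
  insert (Function.update v (lastNZ v) (v (lastNZ v) + 1))
    {w | ∃ j : Fin n, lastNZ v < j ∧ w = Function.update v j 1}

/-- A vector is tested by the orderly generation strategy if it is the root or a
child of a canonical vector. -/
def Tested [NeZero n] (G : Subgroup (Equiv.Perm (Fin n))) (v : Fin n → ℕ) : Prop :=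
  v = 0 ∨ ∃ u : Fin n → ℕ, IsCanonical G u ∧ v ∈ children u

/- The first child of a noncanonical vector is noncanonical, whereas the father of a tested vector
is canonical. Hence the lines of first children issuing from distinct tested noncanonical vectors
are disjoint, and following each of them down to degree `d` injects the tested noncanonical vectors
of degree at most `d` into the noncanonical vectors of degree `d`. With `c` the number of canonical
vectors and `m` the number of all vectors of degree `d`, the excess `T - C` of tested over canonical
vectors up to degree `d` is thus at most `m - c`. An orbit has at most `|G|` elements, so
`m ≤ |G| c`; likewise there are at most `|G| C` vectors of degree at most `d`, and as their number
is `m (n + d) / n`, also `m ≤ |G| a` with `a = n C / (n + d)`. Comparing with the smaller of `c` and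
`a` gives `m - c ≤ (|G| - 1) a`. The bound `n - 1` only uses that a vector has at most `n`
children. -/

open Finset Function

lemma exists_lt_of_toLex_lt_of_sum_eq {ι M : Type*} [Fintype ι] [LinearOrder ι]
    [AddCommMonoid M] [PartialOrder M] [IsOrderedCancelAddMonoid M] [CanonicallyOrderedAdd M]
    {v w : ι → M} {l : ι} (hzero : ∀ i, l < i → v i = 0) (hsum : ∑ i, v i = ∑ i, w i)
    (hlt : toLex v < toLex w) : ∃ q < l, (∀ i < q, v i = w i) ∧ v q < w q := by
  obtain ⟨q, heq, hq⟩ := hlt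
  simp only [Pi.toLex_apply] at heq hq
  refine ⟨q, ?_, heq, hq⟩
  by_contra! hlq
  refine (sum_lt_sum (fun i _ => ?_) ⟨q, mem_univ q, hq⟩).ne hsum
  rcases lt_trichotomy i q with hi | rfl | hi
  · exact (heq i hi).le
  · exact hq.le
  · simp [hzero i (hlq.trans_lt hi)]

section Action

lemma act_one (v : Fin n → ℕ) : act 1 v = v := by
  funext i
  simp [act]

lemma act_mul (σ τ : Equiv.Perm (Fin n)) (v : Fin n → ℕ) : act (σ * τ) v = act σ (act τ v) := by
  funext i
  simp [act]

lemma act_mono (σ : Equiv.Perm (Fin n)) : Monotone (act σ) :=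
  fun _ _ h i => h (σ⁻¹ i)

lemma sum_act (σ : Equiv.Perm (Fin n)) (v : Fin n → ℕ) : ∑ i, act σ v i = ∑ i, v i :=
  Equiv.sum_comp σ⁻¹ v

variable (G : Subgroup (Equiv.Perm (Fin n)))

lemma isCanonical_zero : IsCanonical G 0 := fun _ _ => le_rfl

lemma exists_isCanonical_act (v : Fin n → ℕ) : ∃ σ ∈ G, IsCanonical G (act σ v) := by
  obtain ⟨σ, hσ⟩ := Finite.exists_max fun σ : G => toLex (act σ.1 v)
  refine ⟨σ, σ.2, fun τ hτ => ?_⟩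
  rw [← act_mul]
  exact hσ (⟨τ, hτ⟩ * σ)

variable {G}

lemma IsCanonical.of_le_of_forall_lt_eq {v w : Fin n → ℕ} {l : Fin n} (hv : IsCanonical G v)
    (hle : w ≤ v) (heq : ∀ i < l, w i = v i) (hzero : ∀ i, l < i → w i = 0) :
    IsCanonical G w := by
  intro σ hσ
  by_contra! hlt
  obtain ⟨q, hql, hbefore, hq⟩ := exists_lt_of_toLex_lt_of_sum_eq hzero (sum_act σ w).symm hlt
  have hvw : toLex v < toLex (act σ w) :=
    ⟨q, fun i hi => (heq i (hi.trans hql)).symm.trans (hbefore i hi), (heq q hql).symm.trans_lt hq⟩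
  exact (hvw.trans_le (Pi.toLex_monotone (act_mono σ hle))).not_ge (hv σ hσ)

end Action

section Father

variable [NeZero n]

lemma apply_eq_zero_of_lastNZ_lt {v : Fin n → ℕ} {i : Fin n} (hi : lastNZ v < i) : v i = 0 := by
  by_contra h
  have hv : v ≠ 0 := ne_iff.mpr ⟨i, h⟩
  rw [lastNZ, dif_neg hv] at hi
  exact hi.not_ge (le_max' _ _ (by simpa using h))

lemma apply_lastNZ_ne_zero {v : Fin n → ℕ} (hv : v ≠ 0) : v (lastNZ v) ≠ 0 := by
  rw [lastNZ, dif_neg hv]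
  exact (mem_filter.mp (max'_mem {i | v i ≠ 0} _)).2

lemma lastNZ_eq_of_ne_zero {v : Fin n → ℕ} {l : Fin n} (hl : v l ≠ 0)
    (hzero : ∀ i, l < i → v i = 0) : lastNZ v = l := by
  refine le_antisymm ?_ ?_
  · by_contra! h
    exact apply_lastNZ_ne_zero (ne_iff.mpr ⟨l, hl⟩) (hzero _ h)
  · by_contra! h
    exact hl (apply_eq_zero_of_lastNZ_lt h)

lemma father_zero : father (0 : Fin n → ℕ) = 0 := by
  simp [father]

lemma father_le (v : Fin n → ℕ) : father v ≤ v :=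
  update_le_self_iff.mpr (Nat.sub_le _ _)

lemma father_add_single {v : Fin n → ℕ} (hv : v ≠ 0) :
    father v + Pi.single (lastNZ v) 1 = v := by
  funext i
  by_cases hi : i = lastNZ v
  · subst hi
    simpa [father] using Nat.sub_add_cancel (Nat.one_le_iff_ne_zero.mpr (apply_lastNZ_ne_zero hv))
  · simp [father, hi]

lemma father_update_add_one {v : Fin n → ℕ} {l : Fin n} (hzero : ∀ i, l < i → v i = 0) (a : ℕ) :
    father (update v l (a + 1)) = update v l a := by
  have hlast : lastNZ (update v l (a + 1)) = l :=
    lastNZ_eq_of_ne_zero (by simp) fun i hi => by simp [hi.ne', hzero i hi]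
  simp [father, hlast]

/-- The child of `v` obtained by incrementing its last nonzero entry. Its iterates form the line of
descendants along which tested noncanonical vectors are pushed to a common degree. -/
def firstChild (v : Fin n → ℕ) : Fin n → ℕ :=
  update v (lastNZ v) (v (lastNZ v) + 1)

lemma leftInverse_father_firstChild : LeftInverse father (firstChild (n := n)) := fun v => by
  rw [firstChild, father_update_add_one (fun _ => apply_eq_zero_of_lastNZ_lt), update_eq_self]

lemma sum_firstChild (v : Fin n → ℕ) : ∑ i, firstChild v i = ∑ i, v i + 1 := by
  rw [firstChild, sum_update_of_mem (mem_univ _), sdiff_singleton_eq_erase, add_right_comm,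
    add_sum_erase univ v (mem_univ _)]

lemma sum_iterate_firstChild (k : ℕ) (v : Fin n → ℕ) :
    ∑ i, firstChild^[k] v i = ∑ i, v i + k := by
  induction k with
  | zero => rfl
  | succ k ih => rw [iterate_succ_apply', sum_firstChild, ih, add_assoc]

lemma father_eq_of_mem_children {u v : Fin n → ℕ} (h : v ∈ children u) : father v = u := by
  rcases h with rfl | ⟨j, hj, rfl⟩
  · exact leftInverse_father_firstChild u
  · rw [father_update_add_one (a := 0) fun i hi => apply_eq_zero_of_lastNZ_lt (hj.trans hi),
      ← apply_eq_zero_of_lastNZ_lt hj, update_eq_self]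

variable {G : Subgroup (Equiv.Perm (Fin n))}

lemma IsCanonical.father {v : Fin n → ℕ} (hv : IsCanonical G v) : IsCanonical G (father v) :=
  hv.of_le_of_forall_lt_eq (l := lastNZ v) (father_le v)
    (fun _ hi => update_of_ne hi.ne _ _)
    fun _ hi => (update_of_ne hi.ne' _ _).trans (apply_eq_zero_of_lastNZ_lt hi)

lemma IsCanonical.of_iterate_firstChild {v : Fin n → ℕ} {k : ℕ}
    (h : IsCanonical G (firstChild^[k] v)) : IsCanonical G v := by
  induction k with
  | zero => exact h
  | succ k ih =>
    rw [iterate_succ_apply'] at h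
    have hfather := h.father
    rw [leftInverse_father_firstChild] at hfather
    exact ih hfather

lemma Tested.isCanonical_father {v : Fin n → ℕ} (hv : Tested G v) : IsCanonical G (father v) := by
  rcases hv with rfl | ⟨u, hu, huv⟩
  · rw [father_zero]
    exact isCanonical_zero G
  · exact father_eq_of_mem_children huv ▸ hu

lemma eq_of_iterate_firstChild_eq {v w : Fin n → ℕ} {j k : ℕ}
    (hv : Tested G v) (hvc : ¬ IsCanonical G v) (hw : Tested G w) (hwc : ¬ IsCanonical G w)
    (h : firstChild^[j] v = firstChild^[k] w) : v = w := by
  wlog hjk : j ≤ k generalizing v w j k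
  · exact (this hw hwc hv hvc h.symm (le_of_not_ge hjk)).symm
  obtain ⟨m, rfl⟩ := Nat.exists_eq_add_of_le hjk
  have hvw : v = firstChild^[m] w := by
    rw [iterate_add_apply] at h
    exact leftInverse_father_firstChild.injective.iterate j h
  cases m with
  | zero => exact hvw
  | succ m =>
    have hfather : father v = firstChild^[m] w := by
      rw [hvw, iterate_succ_apply', leftInverse_father_firstChild]
    exact absurd (hfather ▸ hv.isCanonical_father).of_iterate_firstChild hwc

end Father

section Counting

lemma card_piAntidiag_univ {ι : Type*} [Fintype ι] [DecidableEq ι] (i : ℕ) :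
    #(piAntidiag (univ : Finset ι) i) = (Fintype.card ι).multichoose i := by
  rw [← map_sym_eq_piAntidiag, card_map, sym_univ, card_univ, Sym.card_sym_eq_multichoose]

lemma mul_sum_range_multichoose (n d : ℕ) :
    n * ∑ i ∈ range (d + 1), n.multichoose i = (n + d) * n.multichoose d := by
  rw [Nat.sum_range_multichoose]
  cases n with
  | zero => cases d <;> simp
  | succ k =>
    have hadd : d + (k + 1) = k + d + 1 := by ring
    calc (k + 1) * (d + (k + 1)).choose (k + 1)
        = (k + d + 1) * (k + d).choose k := by
          rw [hadd, Nat.add_one_mul_choose_eq, mul_comm]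
      _ = (k + 1 + d) * (k + 1).multichoose d := by
          rw [Nat.multichoose_eq, add_right_comm k 1 d, Nat.add_sub_cancel, Nat.choose_symm_add]

open Classical in
/-- The vectors of degree `i` satisfying `p`, as a finset so that they can be counted. -/
noncomputable def vectorsOfDegree (p : (Fin n → ℕ) → Prop) (i : ℕ) : Finset (Fin n → ℕ) :=
  {v ∈ piAntidiag univ i | p v}

lemma mem_vectorsOfDegree {p : (Fin n → ℕ) → Prop} {i : ℕ} {v : Fin n → ℕ} :
    v ∈ vectorsOfDegree p i ↔ p v ∧ ∑ j, v j = i := by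
  simp [vectorsOfDegree, and_comm]

lemma ncard_setOf_sum_eq (p : (Fin n → ℕ) → Prop) (i : ℕ) :
    {v : Fin n → ℕ | p v ∧ ∑ j, v j = i}.ncard = #(vectorsOfDegree p i) := by
  rw [← Set.ncard_coe_finset]
  congr 1
  ext v
  simp [mem_vectorsOfDegree]

lemma card_vectorsOfDegree_add_card_not (p : (Fin n → ℕ) → Prop) (i : ℕ) :
    #(vectorsOfDegree p i) + #(vectorsOfDegree (fun v => ¬ p v) i) = n.multichoose i := by
  classical
  calc #(vectorsOfDegree p i) + #(vectorsOfDegree (fun v => ¬ p v) i)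
      = #(piAntidiag (univ : Finset (Fin n)) i) := by
        simp only [vectorsOfDegree]
        convert card_filter_add_card_filter_not (s := piAntidiag univ i) p
    _ = n.multichoose i := by rw [card_piAntidiag_univ, Fintype.card_fin]

variable (G : Subgroup (Equiv.Perm (Fin n)))

lemma multichoose_le_card_mul_card_canonical (i : ℕ) :
    n.multichoose i ≤ Nat.card G * #(vectorsOfDegree (IsCanonical G) i) := by
  classical
  calc n.multichoose i = #(piAntidiag (univ : Finset (Fin n)) i) := by
        rw [card_piAntidiag_univ, Fintype.card_fin]
    _ ≤ #((univ : Finset G) ×ˢ vectorsOfDegree (IsCanonical G) i) := by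
        refine card_le_card_of_surjOn (fun x => act x.1.1 x.2) fun v hv => ?_
        obtain ⟨σ, hσ, hc⟩ := exists_isCanonical_act G v
        refine ⟨(⟨σ, hσ⟩⁻¹, act σ v), ?_, by simp [← act_mul, act_one]⟩
        simpa [mem_vectorsOfDegree, hc, sum_act] using hv
    _ = Nat.card G * #(vectorsOfDegree (IsCanonical G) i) := by
        rw [card_product, card_univ, Nat.card_eq_fintype_card]

variable [NeZero n]

lemma card_canonical_pos (i : ℕ) : 0 < #(vectorsOfDegree (IsCanonical G) i) := by
  obtain ⟨σ, -, hc⟩ := exists_isCanonical_act G (Pi.single (0 : Fin n) i)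
  exact card_pos.mpr ⟨_, mem_vectorsOfDegree.mpr ⟨hc, by simp [sum_act]⟩⟩

lemma card_tested_zero_le : #(vectorsOfDegree (Tested G) 0) ≤ 1 :=
  calc #(vectorsOfDegree (Tested G) 0) ≤ n.multichoose 0 :=
        Nat.le.intro (card_vectorsOfDegree_add_card_not (Tested G) 0)
    _ = 1 := Nat.multichoose_zero_right n

lemma card_tested_succ_le (i : ℕ) :
    #(vectorsOfDegree (Tested G) (i + 1)) ≤ n * #(vectorsOfDegree (IsCanonical G) i) := by
  calc #(vectorsOfDegree (Tested G) (i + 1))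
      ≤ #((univ : Finset (Fin n)) ×ˢ vectorsOfDegree (IsCanonical G) i) := by
        refine card_le_card_of_surjOn (fun x => x.2 + Pi.single x.1 1) fun v hv => ?_
        obtain ⟨htested, hsum⟩ := mem_vectorsOfDegree.mp hv
        have hne : v ≠ 0 := by
          rintro rfl
          simp at hsum
        have hfather := father_add_single hne
        refine ⟨(lastNZ v, father v), ?_, hfather⟩
        rw [← hfather] at hsum
        simpa [mem_vectorsOfDegree, htested.isCanonical_father, sum_add_distrib] using hsum
    _ = n * #(vectorsOfDegree (IsCanonical G) i) := by
        rw [card_product, card_univ, Fintype.card_fin]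

lemma sum_card_tested_le_mul_sum_card_canonical (d : ℕ) :
    ∑ i ∈ range (d + 1), #(vectorsOfDegree (Tested G) i) ≤
      n * ∑ i ∈ range (d + 1), #(vectorsOfDegree (IsCanonical G) i) := by
  rw [sum_range_succ', sum_range_succ _ d, mul_add, mul_sum]
  exact add_le_add (sum_le_sum fun i _ => card_tested_succ_le G i)
    ((card_tested_zero_le G).trans (Nat.mul_pos (NeZero.pos n) (card_canonical_pos G d)))

lemma card_tested_le_card_canonical_add (i : ℕ) :
    #(vectorsOfDegree (Tested G) i) ≤ #(vectorsOfDegree (IsCanonical G) i) +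
      #(vectorsOfDegree (fun v => Tested G v ∧ ¬ IsCanonical G v) i) := by
  refine (card_le_card fun v hv => ?_).trans (card_union_le _ _)
  simp only [mem_union, mem_vectorsOfDegree] at hv ⊢
  tauto

lemma sum_card_tested_not_canonical_le (d : ℕ) :
    ∑ i ∈ range (d + 1), #(vectorsOfDegree (fun v => Tested G v ∧ ¬ IsCanonical G v) i) ≤
      #(vectorsOfDegree (fun v => ¬ IsCanonical G v) d) := by
  rw [← card_sigma]
  refine card_le_card_of_injOn (fun x => firstChild^[d - x.1] x.2) ?_ ?_
  · rintro ⟨i, v⟩ hx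
    simp only [coe_sigma, Set.mem_sigma_iff, mem_coe, mem_range, mem_vectorsOfDegree] at hx ⊢
    obtain ⟨hi, ⟨-, hc⟩, hsum⟩ := hx
    refine ⟨fun h => hc h.of_iterate_firstChild, ?_⟩
    rw [sum_iterate_firstChild, hsum]
    omega
  · rintro ⟨i, v⟩ hx ⟨j, w⟩ hy h
    simp only [coe_sigma, Set.mem_sigma_iff, mem_coe, mem_vectorsOfDegree] at hx hy
    obtain ⟨-, ⟨hv, hvc⟩, rfl⟩ := hx
    obtain ⟨-, ⟨hw, hwc⟩, rfl⟩ := hy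
    obtain rfl := eq_of_iterate_firstChild_eq hv hvc hw hwc h
    rfl

lemma sum_card_tested_add_card_canonical_le (d : ℕ) :
    ∑ i ∈ range (d + 1), #(vectorsOfDegree (Tested G) i) + #(vectorsOfDegree (IsCanonical G) d) ≤
      ∑ i ∈ range (d + 1), #(vectorsOfDegree (IsCanonical G) i) + n.multichoose d := by
  have hsplit := sum_le_sum fun i (_ : i ∈ range (d + 1)) => card_tested_le_card_canonical_add G i
  rw [sum_add_distrib] at hsplit
  have hexcess := sum_card_tested_not_canonical_le G d
  have hcompl := card_vectorsOfDegree_add_card_not (IsCanonical G) d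
  omega

end Counting

section Error

lemma sub_le_sub_one_mul_of_le_mul {R : Type*} [Ring R] [LinearOrder R] [IsStrictOrderedRing R]
    {m g a c : R} (hg : 1 ≤ g) (hc : m ≤ g * c) (ha : m ≤ g * a) : m - c ≤ (g - 1) * a := by
  rcases le_total c a with hca | hac
  · calc m - c ≤ (g - 1) * c := by rw [sub_one_mul]; gcongr
      _ ≤ (g - 1) * a := mul_le_mul_of_nonneg_left hca (sub_nonneg.mpr hg)
  · calc m - c ≤ g * a - a := sub_le_sub ha hac
      _ = (g - 1) * a := (sub_one_mul g a).symm

variable (G : Subgroup (Equiv.Perm (Fin n)))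

lemma add_mul_multichoose_le (d : ℕ) :
    (n + d) * n.multichoose d ≤
      n * (Nat.card G * ∑ i ∈ range (d + 1), #(vectorsOfDegree (IsCanonical G) i)) := by
  rw [← mul_sum_range_multichoose, mul_sum _ _ (Nat.card G)]
  gcongr
  exact multichoose_le_card_mul_card_canonical G _

lemma sum_card_tested_sub_sum_card_canonical_le [NeZero n] (d : ℕ) :
    ((∑ i ∈ range (d + 1), #(vectorsOfDegree (Tested G) i) : ℕ) : ℚ) -
        (∑ i ∈ range (d + 1), #(vectorsOfDegree (IsCanonical G) i) : ℕ) ≤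
      n * ((Nat.card G : ℚ) - 1) / (n + d) *
        (∑ i ∈ range (d + 1), #(vectorsOfDegree (IsCanonical G) i) : ℕ) := by
  have hexcess := sum_card_tested_add_card_canonical_le G d
  have horbit := multichoose_le_card_mul_card_canonical G d
  have horbits := add_mul_multichoose_le G d
  have hcard : 1 ≤ Nat.card G := Nat.card_pos
  set C := ∑ i ∈ range (d + 1), #(vectorsOfDegree (IsCanonical G) i)
  set T := ∑ i ∈ range (d + 1), #(vectorsOfDegree (Tested G) i)
  set c := #(vectorsOfDegree (IsCanonical G) d)
  have hden : (0 : ℚ) < n + d := by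
    have hn_pos : 0 < n := NeZero.pos n
    positivity
  have hmean : (n.multichoose d : ℚ) ≤ Nat.card G * (n * C / (n + d)) := by
    rw [mul_div_assoc', le_div_iff₀ hden]
    calc (n.multichoose d : ℚ) * (n + d) = (n + d) * n.multichoose d := mul_comm _ _
      _ ≤ n * (Nat.card G * C) := mod_cast horbits
      _ = Nat.card G * (n * C) := mul_left_comm _ _ _
  calc (T : ℚ) - C ≤ n.multichoose d - c := by
        rw [sub_le_sub_iff, add_comm (n.multichoose d : ℚ)]
        exact_mod_cast hexcess
    _ ≤ (Nat.card G - 1) * (n * C / (n + d)) :=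
        sub_le_sub_one_mul_of_le_mul (mod_cast hcard) (mod_cast horbit) hmean
    _ = n * ((Nat.card G : ℚ) - 1) / (n + d) * C := by ring

end Error

/-- The relative error of orderly generation up to degree `d` is bounded by
`min { n(|G|−1)/(n+d), n−1 }`. -/
theorem stmt9 (n d : ℕ) [NeZero n] (hd : 0 < d) (G : Subgroup (Equiv.Perm (Fin n))) :
    ((∑ i ∈ Finset.range (d + 1),
        ({v : Fin n → ℕ | Tested G v ∧ ∑ j, v j = i}.ncard : ℚ)) -
      (∑ i ∈ Finset.range (d + 1),
        ({v : Fin n → ℕ | IsCanonical G v ∧ ∑ j, v j = i}.ncard : ℚ))) /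
      (∑ i ∈ Finset.range (d + 1),
        ({v : Fin n → ℕ | IsCanonical G v ∧ ∑ j, v j = i}.ncard : ℚ)) ≤
    min ((n * ((Nat.card G : ℚ) - 1)) / (n + d)) ((n : ℚ) - 1) := by
  have hpos : (0 : ℚ) < (∑ i ∈ range (d + 1), #(vectorsOfDegree (IsCanonical G) i) : ℕ) :=
    mod_cast sum_pos (fun i _ => card_canonical_pos G i) nonempty_range_add_one
  simp only [ncard_setOf_sum_eq, ← Nat.cast_sum]
  refine le_min ?_ ?_ <;> rw [div_le_iff₀ hpos]
  · exact sum_card_tested_sub_sum_card_canonical_le G d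
  · rw [sub_one_mul]
    exact sub_le_sub_right (mod_cast sum_card_tested_le_mul_sum_card_canonical G d) _
end

section
/- Let n be a positive integer and G any subgroup of S_n. Then there exists a primitive invariant for G: a polynomial P ∈ ℚ[x_1,…,x_n] such that {σ ∈ S_n : σ·P = P} = G. -/
open MvPolynomial

/-!
Take a monomial whose exponents are pairwise distinct: permutations of the variables carry it to
pairwise distinct monomials. So the sum of its translates under `G` contains the `σ`-translate
exactly when `σ ∈ G`. If `σ` fixes this sum, it maps the original monomial to a term of the sum,
and hence lies in `G`.
-/

section OrbitSum

variable {α R : Type*} [CommSemiring R]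

lemma mapDomain_equiv_injective {β M : Type*} [AddCommMonoid M] {m : α →₀ M}
    (hm : Function.Injective m) :
    Function.Injective fun e : α ≃ β => m.mapDomain e := by
  intro e e' h
  refine Equiv.symm_bijective.injective (Equiv.ext fun b => hm ?_)
  simpa only [Finsupp.mapDomain_equiv_apply] using DFunLike.congr_fun h b

variable (R) in
/-- The sum of the translates of the monomial with exponents `m` under the permutations in `G`,
used as a primitive invariant for `G`. The sum runs over `G` rather than over the orbit of `m`, so
each monomial is counted with the order of its stabilizer in `G`. -/
noncomputable def orbitSum (G : Subgroup (Equiv.Perm α)) [Fintype G] (m : α →₀ ℕ) :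
    MvPolynomial α R :=
  ∑ g : G, monomial (m.mapDomain (g : Equiv.Perm α)) 1

variable {G : Subgroup (Equiv.Perm α)} [Fintype G] {m : α →₀ ℕ} {σ : Equiv.Perm α}

lemma rename_orbitSum_of_mem (hσ : σ ∈ G) : rename σ (orbitSum R G m) = orbitSum R G m := by
  simp only [orbitSum, map_sum, rename_monomial, ← Finsupp.mapDomain_comp,
    ← Equiv.Perm.coe_mul]
  exact Equiv.sum_comp (Equiv.mulLeft (⟨σ, hσ⟩ : G))
    fun g : G => monomial (m.mapDomain (g : Equiv.Perm α)) (1 : R)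

lemma coeff_mapDomain_orbitSum (hm : Function.Injective m) (σ : Equiv.Perm α)
    [Decidable (σ ∈ G)] :
    coeff (m.mapDomain σ) (orbitSum R G m) = if σ ∈ G then 1 else 0 := by
  classical
  simp only [orbitSum, coeff_sum, coeff_monomial, (mapDomain_equiv_injective hm).eq_iff]
  split_ifs with hσ
  · rw [Fintype.sum_eq_single ⟨σ, hσ⟩ fun g hg => if_neg (Subtype.coe_ne_coe.mpr hg), if_pos rfl]
  · exact Finset.sum_eq_zero fun g _ => if_neg (ne_of_mem_of_not_mem g.2 hσ)

lemma rename_orbitSum_eq_self_iff [Nontrivial R] (hm : Function.Injective m) :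
    rename σ (orbitSum R G m) = orbitSum R G m ↔ σ ∈ G := by
  classical
  refine ⟨fun h => ?_, rename_orbitSum_of_mem⟩
  have coeff_self : coeff m (orbitSum R G m) = 1 := by
    simpa [G.one_mem] using coeff_mapDomain_orbitSum (R := R) (G := G) hm 1
  have coeff_translate : coeff (m.mapDomain σ) (orbitSum R G m) = 1 := by
    rw [← h, coeff_rename_mapDomain σ σ.injective, coeff_self]
  by_contra hσ
  rw [coeff_mapDomain_orbitSum hm, if_neg hσ] at coeff_translate
  exact zero_ne_one coeff_translate

end OrbitSum

theorem stmt15_general {α : Type*} [Finite α] (R : Type*) [CommSemiring R] [Nontrivial R]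
    (G : Subgroup (Equiv.Perm α)) :
    ∃ P : MvPolynomial α R, {σ : Equiv.Perm α | rename σ P = P} = (G : Set (Equiv.Perm α)) := by
  cases nonempty_fintype G
  obtain ⟨f, hf⟩ := Countable.exists_injective_nat α
  let m : α →₀ ℕ := Finsupp.equivFunOnFinite.symm f
  exact ⟨orbitSum R G m, Set.ext fun _ => rename_orbitSum_eq_self_iff (m := m) hf⟩

/-- Every subgroup `G` of `S_n` admits a primitive invariant: a polynomial
`P ∈ ℚ[x_1,…,x_n]` whose stabilizer in `S_n`, acting by permuting the variables by
position (i.e. by `rename`), is exactly `G`. -/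
theorem stmt15 (n : ℕ) (hn : 0 < n) (G : Subgroup (Equiv.Perm (Fin n))) :
    ∃ P : MvPolynomial (Fin n) ℚ,
      {σ : Equiv.Perm (Fin n) | rename σ P = P} = (G : Set (Equiv.Perm (Fin n))) :=
  stmt15_general ℚ G
end

section
/- Let K be a field of characteristic 0, n a positive integer, and G a subgroup of S_n acting on K[x_1,…,x_n] by permuting variables by position. Then the invariant ring K[x_1,…,x_n]^G := {P : σ·P = P for all σ ∈ G} is a free module of rank n!/|G| over the ring K[x_1,…,x_n]^{S_n} of symmetric polynomials. -/
open MvPolynomial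

/-- The invariant ring `K[x_1,…,x_n]^G` of a permutation group `G ≤ S_n` acting on
polynomials by permuting variables by position (i.e. by `rename`), as a subalgebra. -/
def invariants (K : Type*) [CommRing K] (n : ℕ) (G : Subgroup (Equiv.Perm (Fin n))) :
    Subalgebra K (MvPolynomial (Fin n) K) where
  carrier := {P | ∀ σ ∈ G, rename σ P = P}
  mul_mem' {P Q} hP hQ := fun σ hσ => by
    rw [map_mul, hP σ hσ, hQ σ hσ]
  add_mem' {P Q} hP hQ := fun σ hσ => by
    rw [map_add, hP σ hσ, hQ σ hσ]
  algebraMap_mem' c := fun σ hσ => by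
    simp [MvPolynomial.algebraMap_eq]

/-- Symmetric polynomials (`S_n`-invariants) are in particular `G`-invariant. -/
theorem symm_le_invariants (K : Type*) [CommRing K] (n : ℕ)
    (G : Subgroup (Equiv.Perm (Fin n))) :
    invariants K n ⊤ ≤ invariants K n G :=
  fun _P hP σ _hσ => hP σ trivial

/-- `K[x]^G` as a module over the ring `K[x]^{S_n}` of symmetric polynomials,
the action being multiplication inside `K[x]`. -/
noncomputable instance invariantsAlgebra (K : Type*) [CommRing K] (n : ℕ)
    (G : Subgroup (Equiv.Perm (Fin n))) :
    Algebra (invariants K n ⊤) (invariants K n G) :=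
  (Subalgebra.inclusion (symm_le_invariants K n G)).toRingHom.toAlgebra

/-!
The variables are the roots of the polynomial `∏ i, (X - x_i)` over the ring `S` of symmetric
polynomials. Adjoining them one at a time shows that `K[x]` is spanned over `S` by `n!` elements;
by Galois theory `n!` is also the rank, so `K[x]` is free over `S`. Let `I` be the ideal of `K[x]`
generated by the symmetric polynomials of positive degree. By the graded Nakayama lemma, homogeneous
polynomials whose classes form a `K`-basis of `K[x] / I` span `K[x]` over `S`, and there are at
most `n!` of them, so they form a basis of `K[x]` over `S`. Averaging over `G` is an `S`-linear and
degree-preserving projection onto `K[x]^G`, hence `K[x]` is spanned over `K` by homogeneous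
polynomials which are either invariant or of average `0`, and the basis can be chosen among these.
Its invariant members then form a basis of `K[x]^G`. Its rank follows from the tower law, since
`K[x]` has rank `|G|` over `K[x]^G`.
-/

section AdjoinRoots

theorem adjoin_eq_top_of_adjoin_insert_eq_top {A S B : Type*} [CommSemiring A]
    [CommSemiring S] [CommSemiring B] [Algebra A S] [Algebra S B] [Algebra A B]
    [IsScalarTower A S B] {y : S} {t : Set B}
    (h : Algebra.adjoin A (insert (algebraMap S B y) t) = ⊤) : Algebra.adjoin S t = ⊤ := by
  have hle : Algebra.adjoin A (insert (algebraMap S B y) t) ≤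
      (Algebra.adjoin S t).restrictScalars A :=
    Algebra.adjoin_le (Set.insert_subset (Subalgebra.algebraMap_mem _ y) Algebra.subset_adjoin)
  exact eq_top_iff.mpr fun b _ => hle (h ▸ Algebra.mem_top)

theorem exists_finset_span_eq_top_of_basis {A S M ι : Type*} [CommSemiring A] [Semiring S]
    [Algebra A S] [AddCommMonoid M] [Module A M] [Module S M] [IsScalarTower A S M] [Fintype ι]
    (b : Module.Basis ι A S) (T : Finset M) (hT : Submodule.span S (T : Set M) = ⊤) :
    ∃ U : Finset M, U.card ≤ Fintype.card ι * T.card ∧ Submodule.span A (U : Set M) = ⊤ := by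
  classical
  open scoped Pointwise in
  refine ⟨Finset.univ.image b • T, ?_, ?_⟩
  · exact Finset.card_smul_le.trans (Nat.mul_le_mul_right _ Finset.card_image_le)
  · rw [Finset.coe_smul, Submodule.span_smul_of_span_eq_top (by simp [b.span_eq]), hT,
      Submodule.restrictScalars_top]

theorem exists_monic_map_adjoinRoot_eq_mul {A : Type*} [CommRing A] {p : Polynomial A}
    (hp : p.Monic) :
    ∃ q : Polynomial (AdjoinRoot p), q.Monic ∧ p.map (AdjoinRoot.of p) =
      (Polynomial.X - Polynomial.C (AdjoinRoot.root p)) * q := by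
  have hroot := Polynomial.mul_divByMonic_eq_iff_isRoot.mpr (AdjoinRoot.isRoot_root p)
  exact ⟨_, (Polynomial.monic_X_sub_C _).of_mul_monic_left (hroot ▸ hp.map _), hroot.symm⟩

theorem exists_finset_span_eq_top_of_adjoin_roots {B : Type*} [CommRing B] [Nontrivial B]
    (s : Multiset B) {A : Type*} [CommRing A] [Algebra A B] {p : Polynomial A} (hp : p.Monic)
    (hps : p.map (algebraMap A B) = (s.map fun b => Polynomial.X - Polynomial.C b).prod)
    (hs : Algebra.adjoin A {b | b ∈ s} = ⊤) :
    ∃ T : Finset B, T.card ≤ s.card.factorial ∧ Submodule.span A (T : Set B) = ⊤ := by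
  induction s using Multiset.induction generalizing A with
  | empty =>
    have hbot : (⊥ : Subalgebra A B) = ⊤ := by simpa using hs
    refine ⟨{1}, by simp, ?_⟩
    rw [Finset.coe_singleton, ← Submodule.one_eq_span, ← Algebra.toSubmodule_bot, hbot,
      Algebra.top_toSubmodule]
  | cons x s ih =>
    have hdeg : p.natDegree = s.card + 1 := by
      rw [← hp.natDegree_map (algebraMap A B), hps,
        Polynomial.natDegree_multiset_prod_X_sub_C_eq_card, Multiset.card_cons]
    have hx : p.eval₂ (algebraMap A B) x = 0 := by simp [← Polynomial.eval_map, hps]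
    let : Algebra (AdjoinRoot p) B := (AdjoinRoot.lift (algebraMap A B) x hx).toAlgebra
    have hof : (algebraMap (AdjoinRoot p) B).comp (AdjoinRoot.of p) = algebraMap A B :=
      AdjoinRoot.lift_comp_of hx
    have hroot : algebraMap (AdjoinRoot p) B (AdjoinRoot.root p) = x := AdjoinRoot.lift_root hx
    have : IsScalarTower A (AdjoinRoot p) B := .of_algebraMap_eq' hof.symm
    obtain ⟨q, hq, hpq⟩ := exists_monic_map_adjoinRoot_eq_mul hp
    have hqs : q.map (algebraMap (AdjoinRoot p) B) =
        (s.map fun b => Polynomial.X - Polynomial.C b).prod := by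
      apply (Polynomial.monic_X_sub_C x).isRegular.left
      calc (Polynomial.X - Polynomial.C x) * q.map (algebraMap (AdjoinRoot p) B)
          = (p.map (AdjoinRoot.of p)).map (algebraMap (AdjoinRoot p) B) := by
            simp [hpq, hroot]
        _ = p.map (algebraMap A B) := by rw [Polynomial.map_map, hof]
        _ = _ := by rw [hps, Multiset.map_cons, Multiset.prod_cons]
    have hadjoin : Algebra.adjoin (AdjoinRoot p) {b | b ∈ s} = ⊤ := by
      refine adjoin_eq_top_of_adjoin_insert_eq_top (A := A) (y := AdjoinRoot.root p) ?_
      rw [hroot, ← hs]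
      congr 1
      ext b
      simp
    obtain ⟨T, hTcard, hT⟩ := ih hq hqs hadjoin
    obtain ⟨U, hUcard, hU⟩ :=
      exists_finset_span_eq_top_of_basis (AdjoinRoot.powerBasis' hp).basis T hT
    refine ⟨U, ?_, hU⟩
    rw [Fintype.card_fin, AdjoinRoot.powerBasis'_dim, hdeg] at hUcard
    rw [Multiset.card_cons, Nat.factorial_succ]
    exact hUcard.trans (Nat.mul_le_mul_left _ hTcard)

end AdjoinRoots

section GradedSubalgebra

open DirectSum

theorem mem_of_forall_decompose_mem {ι M σ S : Type*} [DecidableEq ι] [AddCommMonoid M]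
    [SetLike σ M] [AddSubmonoidClass σ M] (ℳ : ι → σ) [Decomposition ℳ] [SetLike S M]
    [AddSubmonoidClass S M] {N : S} {x : M} (h : ∀ i, (decompose ℳ x i : M) ∈ N) : x ∈ N := by
  classical
  rw [← sum_support_decompose ℳ x]
  exact sum_mem fun i _ => h i

theorem isHomogeneous_span {ι K M : Type*} [DecidableEq ι] [Semiring K]
    [AddCommMonoid M] [Module K M] {ℳ : ι → Submodule K M} [Decomposition ℳ] {s : Set M}
    (hs : ∀ b ∈ s, SetLike.IsHomogeneousElem ℳ b) :
    SetLike.IsHomogeneous ℳ (Submodule.span K s) := by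
  intro k x hx
  induction hx using Submodule.span_induction with
  | zero => simp
  | add _ _ _ _ hx hy => simpa using add_mem hx hy
  | smul c _ _ hx => exact decompose_smul ℳ c _ ▸ Submodule.smul_mem _ c hx
  | mem b hb =>
    obtain ⟨i, hi⟩ := hs b hb
    rcases eq_or_ne i k with rfl | hik
    · rw [decompose_of_mem_same ℳ hi]
      exact Submodule.subset_span hb
    · rw [decompose_of_mem_ne ℳ hi hik]
      exact zero_mem _

variable {K R : Type*} [CommRing K] [CommRing R] [Algebra K R]

/-- The Hilbert ideal of `A`, generated by the homogeneous elements of `A` of positive degree. For a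
homogeneous `A` with `A₀ = K`, the quotient `R ⧸ hilbertIdeal 𝒜 A` is `K ⊗[A] R`, so that its
dimension is the minimal number of homogeneous generators of `R` over `A`. -/
def hilbertIdeal (𝒜 : ℕ → Submodule K R) (A : Subalgebra K R) : Ideal R :=
  Ideal.span {a | a ∈ A ∧ ∃ i, 0 < i ∧ a ∈ 𝒜 i}

variable {𝒜 : ℕ → Submodule K R} [GradedAlgebra 𝒜] {A : Subalgebra K R}

theorem decompose_mem_of_mem_hilbertIdeal {N : Submodule A R} {k : ℕ}
    (hN : ∀ j < k, ∀ x, (decompose 𝒜 x j : R) ∈ N) {y : R} (hy : y ∈ hilbertIdeal 𝒜 A) :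
    (decompose 𝒜 y k : R) ∈ N := by
  induction hy using Submodule.closure_induction with
  | zero => simp
  | add _ _ _ _ hx hy => simpa using add_mem hx hy
  | smul_mem c a ha =>
    obtain ⟨haA, i, hi, hai⟩ := ha
    rw [smul_eq_mul, coe_decompose_mul_of_right_mem 𝒜 k hai]
    split_ifs with hik
    · rw [mul_comm]
      exact N.smul_mem (⟨a, haA⟩ : A) (hN (k - i) (by omega) c)
    · exact zero_mem N

theorem span_eq_top_of_span_sup_hilbertIdeal_eq_top {s : Set R}
    (hs : ∀ b ∈ s, SetLike.IsHomogeneousElem 𝒜 b)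
    (h : Submodule.span K s ⊔ (hilbertIdeal 𝒜 A).restrictScalars K = ⊤) :
    Submodule.span A s = ⊤ := by
  have key (k : ℕ) : ∀ x, (decompose 𝒜 x k : R) ∈ Submodule.span A s := by
    induction k using Nat.strong_induction_on with
    | _ k ih =>
      intro x
      obtain ⟨y, hy, z, hz, rfl⟩ := Submodule.mem_sup.mp (h ▸ Submodule.mem_top (x := x))
      rw [decompose_add, DirectSum.add_apply, Submodule.coe_add]
      exact add_mem
        (Submodule.span_le_restrictScalars K A s (isHomogeneous_span hs k hy))
        (decompose_mem_of_mem_hilbertIdeal ih hz)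
  exact eq_top_iff.mpr fun x _ => mem_of_forall_decompose_mem 𝒜 fun k => key k x

theorem toSubmodule_le_one_sup_hilbertIdeal (hA : SetLike.IsHomogeneous 𝒜 A) (h0 : 𝒜 0 ≤ 1) :
    Subalgebra.toSubmodule A ≤ 1 ⊔ (hilbertIdeal 𝒜 A).restrictScalars K := by
  refine fun a ha => mem_of_forall_decompose_mem 𝒜 fun i => ?_
  rcases i.eq_zero_or_pos with rfl | hi
  · exact Submodule.mem_sup_left (h0 (decompose 𝒜 a 0).2)
  · exact Submodule.mem_sup_right (Ideal.subset_span ⟨hA i ha, i, hi, (decompose 𝒜 a i).2⟩)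

theorem span_sup_hilbertIdeal_eq_top (hA : SetLike.IsHomogeneous 𝒜 A) (h0 : 𝒜 0 ≤ 1) {s : Set R}
    (hs : Submodule.span A s = ⊤) :
    Submodule.span K s ⊔ (hilbertIdeal 𝒜 A).restrictScalars K = ⊤ := by
  refine eq_top_iff.mpr fun x _ => ?_
  have hx : x ∈ Submodule.span A s := hs ▸ Submodule.mem_top
  induction hx using Submodule.closure_induction with
  | zero => exact zero_mem _
  | add _ _ _ _ hx hy => exact add_mem (hx trivial) (hy trivial)
  | smul_mem a b hb =>
    obtain ⟨_, ⟨c, rfl⟩, z, hz, hcz⟩ :=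
      Submodule.mem_sup.mp (toSubmodule_le_one_sup_hilbertIdeal hA h0 a.2)
    have hab : a • b = c • b + b * z := by
      rw [Subalgebra.smul_def, ← hcz, smul_eq_mul, LinearMap.toSpanSingleton_apply, add_mul,
        smul_one_mul, mul_comm z]
    rw [hab]
    exact add_mem (Submodule.mem_sup_left (Submodule.smul_mem _ c (Submodule.subset_span hb)))
      (Submodule.mem_sup_right (Ideal.mul_mem_left _ b hz))

end GradedSubalgebra

theorem free_of_basis_forall_mem_or_mem {A M ι : Type*} [Ring A] [AddCommGroup M]
    [Module A M] {p q : Submodule A M} (hpq : Disjoint p q) (b : Module.Basis ι A M)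
    (hb : ∀ i, b i ∈ p ∨ b i ∈ q) : Module.Free A p := by
  let v : {i // b i ∈ p} → M := fun i => b i
  have hle : Submodule.span A (Set.range v) ≤ p :=
    Submodule.span_le.mpr (Set.range_subset_iff.mpr fun i => i.2)
  have htop : ⊤ ≤ Submodule.span A (Set.range v) ⊔ q := by
    rw [← b.span_eq, Submodule.span_le]
    rintro _ ⟨i, rfl⟩
    by_cases hi : b i ∈ p
    · exact Submodule.mem_sup_left (Submodule.subset_span ⟨⟨i, hi⟩, rfl⟩)
    · exact Submodule.mem_sup_right ((hb i).resolve_left hi)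
  have hp : Submodule.span A (Set.range v) = p :=
    eq_of_le_of_inf_le_of_sup_le hle (hpq.le_bot.trans bot_le) (le_top.trans htop)
  exact hp ▸ .of_basis (.span (b.linearIndependent.comp _ Subtype.val_injective))

section FreeOverGradedSubalgebra

variable {K R : Type*} [Field K] [CommRing R] [Algebra K R] {𝒜 : ℕ → Submodule K R}
  [GradedAlgebra 𝒜] {A : Subalgebra K R}

open DirectSum

theorem span_mkQ_hilbertIdeal_eq_top (hA : SetLike.IsHomogeneous 𝒜 A) (h0 : 𝒜 0 ≤ 1)
    {ι : Type*} {v : ι → R} (hv : Submodule.span A (Set.range v) = ⊤) :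
    Submodule.span K (Set.range (((hilbertIdeal 𝒜 A).restrictScalars K).mkQ ∘ v)) = ⊤ := by
  rw [Set.range_comp, Submodule.span_image, Submodule.map_mkQ_eq_top, sup_comm]
  exact span_sup_hilbertIdeal_eq_top hA h0 hv

theorem finite_quotient_hilbertIdeal [Module.Finite A R] (hA : SetLike.IsHomogeneous 𝒜 A)
    (h0 : 𝒜 0 ≤ 1) : Module.Finite K (R ⧸ (hilbertIdeal 𝒜 A).restrictScalars K) := by
  obtain ⟨n, v, hv⟩ := Module.Finite.exists_fin (R := A) (M := R)
  exact ⟨span_mkQ_hilbertIdeal_eq_top hA h0 hv ▸ Submodule.fg_span (Set.finite_range _)⟩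

theorem finrank_quotient_hilbertIdeal_le [Nontrivial R] [Module.Free A R] [Module.Finite A R]
    (hA : SetLike.IsHomogeneous 𝒜 A) (h0 : 𝒜 0 ≤ 1) :
    Module.finrank K (R ⧸ (hilbertIdeal 𝒜 A).restrictScalars K) ≤ Module.finrank A R := by
  let b := Module.Free.chooseBasis A R
  rw [Module.finrank_eq_card_basis b]
  exact finrank_le_of_span_eq_top (span_mkQ_hilbertIdeal_eq_top hA h0 b.span_eq)

theorem exists_basis_subset_of_span_eq_top [Nontrivial R] [Module.Free A R] [Module.Finite A R]
    (hA : SetLike.IsHomogeneous 𝒜 A) (h0 : 𝒜 0 ≤ 1) {H : Set R}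
    (hH : ∀ b ∈ H, SetLike.IsHomogeneousElem 𝒜 b) (hspan : Submodule.span K H = ⊤) :
    ∃ t ⊆ H, ∃ b : Module.Basis t A R, ⇑b = (↑) := by
  let π := ((hilbertIdeal 𝒜 A).restrictScalars K).mkQ
  have := finite_quotient_hilbertIdeal hA h0
  obtain ⟨t, htH, -, hHt, hli⟩ :=
    exists_linearIndepOn_extension (linearIndepOn_empty K π) (Set.empty_subset H)
  have := LinearIndependent.finite hli
  have := Fintype.ofFinite t
  have hcard : Fintype.card t ≤ Module.finrank A R :=
    hli.fintype_card_le_finrank.trans (finrank_quotient_hilbertIdeal_le hA h0)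
  have htop : Submodule.span A (Set.range ((↑) : t → R)) = ⊤ := by
    rw [Subtype.range_coe]
    refine span_eq_top_of_span_sup_hilbertIdeal_eq_top (fun b hb => hH b (htH hb)) ?_
    rw [sup_comm, ← Submodule.map_mkQ_eq_top, ← Submodule.span_image, eq_top_iff,
      ← Submodule.range_mkQ, ← Submodule.map_top, ← hspan, ← Submodule.span_image]
    exact Submodule.span_le.mpr hHt
  exact ⟨t, htH, .mk (linearIndependent_of_top_le_span_of_card_le_finrank htop.ge hcard) htop.ge,
    Module.Basis.coe_mk _ _⟩

theorem free_of_isProj_of_forall_mem [Nontrivial R] [Module.Free A R] [Module.Finite A R]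
    (hA : SetLike.IsHomogeneous 𝒜 A) (h0 : 𝒜 0 ≤ 1) {p : Submodule A R} {f : R →ₗ[A] R}
    (hf : LinearMap.IsProj p f) (hdeg : ∀ i, ∀ x ∈ 𝒜 i, f x ∈ 𝒜 i) : Module.Free A p := by
  let H : Set R := {x | SetLike.IsHomogeneousElem 𝒜 x ∧ (x ∈ p ∨ x ∈ LinearMap.ker f)}
  have hH : Submodule.span K H = ⊤ := by
    refine eq_top_iff.mpr fun x _ => mem_of_forall_decompose_mem 𝒜 fun i => ?_
    have hxi := (decompose 𝒜 x i).2
    rw [← add_sub_cancel (f (decompose 𝒜 x i)) (decompose 𝒜 x i)]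
    refine add_mem (Submodule.subset_span ⟨⟨i, hdeg i _ hxi⟩, .inl (hf.map_mem _)⟩)
      (Submodule.subset_span ⟨⟨i, sub_mem hxi (hdeg i _ hxi)⟩, .inr ?_⟩)
    rw [LinearMap.mem_ker, map_sub, hf.map_id _ (hf.map_mem _), sub_self]
  obtain ⟨t, htH, b, hb⟩ := exists_basis_subset_of_span_eq_top hA h0 (fun _ hx => hx.1) hH
  exact free_of_basis_forall_mem_or_mem hf.isCompl.disjoint b fun i => hb ▸ (htH i.2).2

theorem free_invariants_of_forall_mem {G : Type*} [Group G] [Nontrivial R] [Module.Free A R]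
    [Module.Finite A R] (hA : SetLike.IsHomogeneous 𝒜 A) (h0 : 𝒜 0 ≤ 1)
    (hG : (Nat.card G : K) ≠ 0) (ρ : Representation A G R)
    (hρ : ∀ g i, ∀ x ∈ 𝒜 i, ρ g x ∈ 𝒜 i) : Module.Free A ρ.invariants := by
  have : Finite G := Nat.finite_of_card_ne_zero fun h => hG (by simp [h])
  let := Fintype.ofFinite G
  rw [Nat.card_eq_fintype_card] at hG
  let : Invertible (Fintype.card G : K) := invertibleOfNonzero hG
  let : Invertible (Fintype.card G : A) :=
    (Invertible.map (algebraMap K A) (Fintype.card G : K)).copy _ (map_natCast _ _).symm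
  refine free_of_isProj_of_forall_mem hA h0 ρ.isProj_averageMap fun i x hx => ?_
  have havg : ρ.averageMap x = ⅟(Fintype.card G : K) • ∑ g, ρ g x := by
    rw [Representation.averageMap, GroupAlgebra.average, map_smul, map_sum, LinearMap.smul_apply,
      LinearMap.sum_apply]
    simp_rw [Representation.asAlgebraHom_of]
    exact algebraMap_smul A (⅟(Fintype.card G : K)) _
  exact havg ▸ Submodule.smul_mem _ _ (sum_mem fun g _ => hρ g i x hx)

theorem free_of_isInvariant {B G : Type*} [CommRing B] [Algebra A B] [Algebra B R]
    [IsScalarTower A B R] [FaithfulSMul B R] [Group G] [MulSemiringAction G R] [SMulCommClass G A R]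
    [SMulCommClass G B R] [Algebra.IsInvariant B R G] [Nontrivial R] [Module.Free A R]
    [Module.Finite A R] (hA : SetLike.IsHomogeneous 𝒜 A) (h0 : 𝒜 0 ≤ 1)
    (hG : (Nat.card G : K) ≠ 0) (hdeg : ∀ (g : G) (i : ℕ), ∀ x ∈ 𝒜 i, g • x ∈ 𝒜 i) :
    Module.Free A B := by
  let ρ := Representation.ofDistribMulAction A G R
  let f : B →ₗ[A] R := (IsScalarTower.toAlgHom A B R).toLinearMap
  have hf : Function.Injective f := FaithfulSMul.algebraMap_injective B R
  have hrange : LinearMap.range f = ρ.invariants := by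
    ext x
    refine ⟨?_, fun hx => Algebra.IsInvariant.isInvariant (A := B) x hx⟩
    rintro ⟨b, rfl⟩ g
    exact smul_algebraMap g b
  have : Module.Free A (LinearMap.range f) :=
    hrange ▸ free_invariants_of_forall_mem hA h0 hG ρ hdeg
  exact .of_equiv (LinearEquiv.ofInjective f hf).symm

end FreeOverGradedSubalgebra

section Invariants

open Equiv

/-- Permutations of the variables acting on polynomials by ring automorphisms. Kept local, so that
it does not compete with other actions on polynomials. -/
noncomputable abbrev permMulSemiringAction (σ K : Type*) [CommRing K] :
    MulSemiringAction (Perm σ) (MvPolynomial σ K) where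
  smul g P := rename g P
  one_smul P := rename_id_apply P
  mul_smul g h P := (rename_rename h g P).symm
  smul_zero g := map_zero (rename g)
  smul_add g := map_add (rename g)
  smul_one g := map_one (rename g)
  smul_mul g := map_mul (rename g)

attribute [local instance] permMulSemiringAction MvPolynomial.gradedAlgebra

variable {K : Type*} [CommRing K] {n : ℕ}

theorem isHomogeneous_invariants (G : Subgroup (Perm (Fin n))) :
    DirectSum.SetLike.IsHomogeneous (homogeneousSubmodule (Fin n) K) (invariants K n G) :=
  fun k P hP σ hσ => by
    rw [← DirectSum.Decomposition.decompose'_eq, decomposition.decompose'_apply,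
      rename_homogeneousComponent, hP σ hσ]

theorem exists_monic_map_eq_prod_X_sub_C_X :
    ∃ p : Polynomial (invariants K n ⊤), p.Monic ∧
      p.map (algebraMap (invariants K n ⊤) (MvPolynomial (Fin n) K)) =
        ∏ i, (Polynomial.X - Polynomial.C (X i)) := by
  let P : Polynomial (MvPolynomial (Fin n) K) := ∏ i, (Polynomial.X - Polynomial.C (X i))
  have hP : P.Monic := Polynomial.monic_prod_X_sub_C _ _
  have hmap (σ : Perm (Fin n)) :
      P.map (rename σ : MvPolynomial (Fin n) K →ₐ[K] MvPolynomial (Fin n) K) = P := by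
    simpa [P, Polynomial.map_prod] using
      Equiv.prod_comp σ fun i => Polynomial.X - Polynomial.C (X i : MvPolynomial (Fin n) K)
  have hlifts : P ∈ Polynomial.lifts (algebraMap (invariants K n ⊤) (MvPolynomial (Fin n) K)) := by
    refine (Polynomial.lifts_iff_coeff_lifts P).mpr fun k => ⟨⟨P.coeff k, fun σ _ => ?_⟩, rfl⟩
    conv_rhs => rw [← hmap σ, Polynomial.coeff_map]
    rfl
  obtain ⟨p, hp, -, hpm⟩ := Polynomial.lifts_and_natDegree_eq_and_monic hlifts hP
  exact ⟨p, hpm, hp⟩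

theorem adjoin_range_X_eq_top {σ : Type*} (A : Subalgebra K (MvPolynomial σ K)) :
    Algebra.adjoin A (Set.range X : Set (MvPolynomial σ K)) = ⊤ := by
  have hle : Algebra.adjoin K (Set.range X) ≤
      (Algebra.adjoin A (Set.range X : Set (MvPolynomial σ K))).restrictScalars K :=
    Algebra.adjoin_le Algebra.subset_adjoin
  exact eq_top_iff.mpr fun P _ => hle (adjoin_range_X (R := K) ▸ Algebra.mem_top)

variable (K n)

theorem exists_finset_span_invariants_top_eq_top [Nontrivial K] :
    ∃ T : Finset (MvPolynomial (Fin n) K), T.card ≤ n.factorial ∧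
      Submodule.span (invariants K n ⊤) (T : Set (MvPolynomial (Fin n) K)) = ⊤ := by
  obtain ⟨p, hp, hpX⟩ := exists_monic_map_eq_prod_X_sub_C_X (K := K) (n := n)
  let s : Multiset (MvPolynomial (Fin n) K) := Finset.univ.val.map X
  have hps : p.map (algebraMap _ _) = (s.map fun b => Polynomial.X - Polynomial.C b).prod := by
    rw [hpX, Multiset.map_map]
    rfl
  have hs : Algebra.adjoin (invariants K n ⊤) {b | b ∈ s} = ⊤ := by
    rw [← adjoin_range_X_eq_top]
    congr 1
    ext
    simp [s]
  simpa [s] using exists_finset_span_eq_top_of_adjoin_roots s hp hps hs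

variable (G : Subgroup (Perm (Fin n)))

instance smulCommClass_invariants :
    SMulCommClass G (invariants K n G) (MvPolynomial (Fin n) K) where
  smul_comm g a P := by
    change rename g.1 ((a : MvPolynomial (Fin n) K) * P) = a * rename g.1 P
    rw [map_mul, a.2 g.1 g.2]

instance smulCommClass_invariants_top :
    SMulCommClass G (invariants K n ⊤) (MvPolynomial (Fin n) K) where
  smul_comm g a := smul_comm g (Subalgebra.inclusion (symm_le_invariants K n G) a)

instance isScalarTower_invariants :
    IsScalarTower (invariants K n ⊤) (invariants K n G) (MvPolynomial (Fin n) K) :=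
  .of_algebraMap_eq fun _ => rfl

theorem isGaloisGroup_invariants [Nontrivial K] :
    IsGaloisGroup G (invariants K n G) (MvPolynomial (Fin n) K) where
  faithful := ⟨fun {g h} hgh => Subtype.ext <| Equiv.ext fun i => X_injective (R := K) <| by
    simpa only [rename_X] using
      (show rename g.1 (X i : MvPolynomial (Fin n) K) = rename h.1 (X i) from hgh (X i))⟩
  commutes := inferInstance
  isInvariant := ⟨fun P hP => ⟨⟨P, fun σ hσ => hP ⟨σ, hσ⟩⟩, rfl⟩⟩

theorem finrank_over_invariants [IsDomain K] :
    Module.finrank (invariants K n G) (MvPolynomial (Fin n) K) = Nat.card G := by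
  have := isGaloisGroup_invariants K n G
  exact (IsGaloisGroup.card_eq_finrank' G (invariants K n G) (MvPolynomial (Fin n) K)).symm

theorem finrank_over_invariants_top [IsDomain K] :
    Module.finrank (invariants K n ⊤) (MvPolynomial (Fin n) K) = n.factorial := by
  rw [finrank_over_invariants, Subgroup.card_top, Nat.card_perm, Nat.card_fin]

theorem free_and_finite_over_invariants_top [IsDomain K] :
    Module.Free (invariants K n ⊤) (MvPolynomial (Fin n) K) ∧
      Module.Finite (invariants K n ⊤) (MvPolynomial (Fin n) K) := by
  obtain ⟨T, hT, hspan⟩ := exists_finset_span_invariants_top_eq_top K n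
  have htop : ⊤ ≤ Submodule.span (invariants K n ⊤)
      (Set.range ((↑) : T → MvPolynomial (Fin n) K)) := by simp [hspan]
  have hli := linearIndependent_of_top_le_span_of_card_le_finrank htop
    (by rwa [Fintype.card_coe, finrank_over_invariants_top])
  exact ⟨.of_basis (.mk hli htop), ⟨T, hspan⟩⟩

theorem finrank_invariants_mul_card [IsDomain K] :
    Module.finrank (invariants K n ⊤) (invariants K n G) * Nat.card G = n.factorial := by
  rw [← finrank_over_invariants K n G, ← finrank_over_invariants_top K n,
    Module.finrank_mul_finrank']

theorem free_invariants {K : Type*} [Field K] {n : ℕ} {G : Subgroup (Perm (Fin n))}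
    (hG : (Nat.card G : K) ≠ 0) : Module.Free (invariants K n ⊤) (invariants K n G) := by
  have := isGaloisGroup_invariants K n G
  obtain ⟨_, _⟩ := free_and_finite_over_invariants_top K n
  exact free_of_isInvariant (isHomogeneous_invariants ⊤) (homogeneousSubmodule_zero _).le hG
    fun g i P hP => IsHomogeneous.rename_isHomogeneous hP

end Invariants

theorem stmt17_general (K : Type*) [Field K] (n : ℕ) (G : Subgroup (Equiv.Perm (Fin n)))
    (hG : (Nat.card G : K) ≠ 0) :
    Module.Free (invariants K n ⊤) (invariants K n G) ∧
    Module.rank (invariants K n ⊤) (invariants K n G) =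
      (Nat.factorial n / Nat.card G : ℕ) := by
  have hfree := free_invariants hG
  have hmul := finrank_invariants_mul_card K n G
  have hpos := Nat.pos_of_mul_pos_right (hmul ▸ n.factorial_pos)
  have := Module.finite_of_finrank_pos hpos
  exact ⟨hfree, by rw [← Module.finrank_eq_rank, ← hmul, Nat.mul_div_cancel _ Nat.card_pos]⟩

set_option synthInstance.maxHeartbeats 800000 in
/-- For `K` a field of characteristic `0`, the invariant ring `K[x_1,…,x_n]^G` is a
free module of rank `n!/|G|` over the symmetric polynomials `K[x_1,…,x_n]^{S_n}`. -/
theorem stmt17 (K : Type*) [Field K] [CharZero K] (n : ℕ) (hn : 0 < n)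
    (G : Subgroup (Equiv.Perm (Fin n))) :
    Module.Free (invariants K n ⊤) (invariants K n G) ∧
    Module.rank (invariants K n ⊤) (invariants K n G) =
      (Nat.factorial n / Nat.card G : ℕ) :=
  stmt17_general K n G (Nat.cast_ne_zero.mpr Nat.card_pos.ne')
end
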